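/- The bottleneck distance bounds the interleaving distance: for interval decomposable n-parameter persistence modules M and N, d^ω(M,N) ≤ d_B(M,N), where d^ω is the interleaving distance with respect to ω_Γ = ‖Γ − id‖_∞ and d_B is the bottleneck distance; moreover this inequality can be strict: there exist rectangle decomposable 2-parameter modules M, N that are 1-interleaved but admit no ε-matching for any ε < 3. -/

import Mathlib

open scoped ENNReal NNReal BigOperators

universe u v w

/-- A persistence module over a preorder `P` with coefficients in a field `𝕜`:
a functor from the poset `P` to the category of `𝕜`-vector spaces. -/
structure PersistenceModule (P : Type u) [Preorder P] (𝕜 : Type v) [Field 𝕜] where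
  obj : P → Type w
  [isAddCommGroup : ∀ a, AddCommGroup (obj a)]
  [isModule : ∀ a, Module 𝕜 (obj a)]
  map : ∀ {a b : P}, a ≤ b → (obj a →ₗ[𝕜] obj b)
  map_id : ∀ a : P, map (le_refl a) = LinearMap.id
  map_comp : ∀ {a b c : P} (hab : a ≤ b) (hbc : b ≤ c),
      map (le_trans hab hbc) = (map hbc).comp (map hab)

attribute [instance] PersistenceModule.isAddCommGroup PersistenceModule.isModule

namespace PersistenceModule

variable {P : Type u} [Preorder P] {𝕜 : Type v} [Field 𝕜]

/-- The rank invariant `β^{a,b} = dim (Im (M (a ≤ b)))`. -/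
noncomputable def rankInv (M : PersistenceModule P 𝕜) {a b : P} (hab : a ≤ b) : Cardinal :=
  Module.rank 𝕜 (LinearMap.range (M.map hab))

/-- Pointwise finite dimensional persistence module. -/
def PointwiseFiniteDimensional (M : PersistenceModule P 𝕜) : Prop :=
  ∀ a : P, FiniteDimensional 𝕜 (M.obj a)

section Landscape

variable {n : ℕ}

lemma sub_le_add_self {x h : Fin n → ℝ} (hh : 0 ≤ h) : x - h ≤ x + h :=
  le_trans (sub_le_self x hh) (le_add_of_nonneg_right hh)

/-- Generalised landscape function with respect to a size function `ν` on `ℝⁿ`: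
`λ(k, x) = sup { ε ≥ 0 : β^{x-h, x+h} ≥ k for all h ≥ 0 with ν h ≤ ε }`. -/
noncomputable def landscapeBy (ν : (Fin n → ℝ) → ℝ)
    (M : PersistenceModule (Fin n → ℝ) 𝕜) (k : ℕ) (x : Fin n → ℝ) : ℝ≥0∞ :=
  sSup {ε : ℝ≥0∞ | ∀ h : Fin n → ℝ, (hh : 0 ≤ h) → ENNReal.ofReal (ν h) ≤ ε →
    (k : Cardinal) ≤ M.rankInv (sub_le_add_self hh (x := x))}

/-- The uniform persistence `∞`-landscape (the sup norm is the norm on `Fin n → ℝ`). -/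
noncomputable def landscapeInfty (M : PersistenceModule (Fin n → ℝ) 𝕜) :
    ℕ → (Fin n → ℝ) → ℝ≥0∞ :=
  landscapeBy (fun h => ‖h‖) M

/-- The `w`-weighted infinity norm `‖h‖_∞^w = max_i |w_i h_i|`. -/
noncomputable def wnorm (w : Fin n → ℝ) (h : Fin n → ℝ) : ℝ :=
  ‖fun i => w i * h i‖

/-- The `w`-weighted persistence landscape. -/
noncomputable def landscapeW (w : Fin n → ℝ) (M : PersistenceModule (Fin n → ℝ) 𝕜) :
    ℕ → (Fin n → ℝ) → ℝ≥0∞ :=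
  landscapeBy (wnorm w) M

/-- The `p`-norm on `ℝⁿ`, via `PiLp`. -/
noncomputable def pnorm (p : ℝ≥0∞) [Fact (1 ≤ p)] (h : Fin n → ℝ) : ℝ :=
  ‖(WithLp.equiv p (Fin n → ℝ)).symm h‖

/-- The uniform persistence `p`-landscape. -/
noncomputable def landscapeP (p : ℝ≥0∞) [Fact (1 ≤ p)]
    (M : PersistenceModule (Fin n → ℝ) 𝕜) : ℕ → (Fin n → ℝ) → ℝ≥0∞ :=
  landscapeBy (pnorm p) M

end Landscape

section Interleaving

/-- An `(Γ, K)`-interleaving between two persistence modules. -/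
structure Interleaving (M N : PersistenceModule P 𝕜) (Γ K : P → P)
    (hΓ : Monotone Γ) (hΓi : ∀ x, x ≤ Γ x) (hK : Monotone K) (hKi : ∀ x, x ≤ K x) where
  φ : ∀ a : P, M.obj a →ₗ[𝕜] N.obj (Γ a)
  ψ : ∀ a : P, N.obj a →ₗ[𝕜] M.obj (K a)
  φ_nat : ∀ {a b : P} (hab : a ≤ b), (φ b).comp (M.map hab) = (N.map (hΓ hab)).comp (φ a)
  ψ_nat : ∀ {a b : P} (hab : a ≤ b), (ψ b).comp (N.map hab) = (M.map (hK hab)).comp (ψ a)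
  comm₁ : ∀ a : P, (ψ (Γ a)).comp (φ a) = M.map ((hΓi a).trans (hKi (Γ a)))
  comm₂ : ∀ a : P, (φ (K a)).comp (ψ a) = N.map ((hKi a).trans (hΓi (K a)))

variable {n : ℕ}

/-- Interleaving distance with respect to the sublinear projection induced by a size
function `ν`, i.e. `ω_Γ = sup_x ν (Γ x - x)`. -/
noncomputable def interleavingDistBy (ν : (Fin n → ℝ) → ℝ)
    (M N : PersistenceModule (Fin n → ℝ) 𝕜) : ℝ≥0∞ :=
  sInf {ε : ℝ≥0∞ | ∃ (Γ K : (Fin n → ℝ) → (Fin n → ℝ)) (hΓ : Monotone Γ)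
    (hΓi : ∀ x, x ≤ Γ x) (hK : Monotone K) (hKi : ∀ x, x ≤ K x),
    Nonempty (Interleaving M N Γ K hΓ hΓi hK hKi) ∧
    (⨆ x, ENNReal.ofReal (ν (Γ x - x))) ≤ ε ∧ (⨆ x, ENNReal.ofReal (ν (K x - x))) ≤ ε}

/-- The interleaving distance with respect to `ω_Γ = ‖Γ - id‖_∞`. -/
noncomputable def interleavingDist (M N : PersistenceModule (Fin n → ℝ) 𝕜) : ℝ≥0∞ :=
  interleavingDistBy (fun h => ‖h‖) M N

end Interleaving

end PersistenceModule
namespace PersistenceModule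

variable {P : Type u} [Preorder P] {𝕜 : Type v} [Field 𝕜]

/-- Convexity condition for an interval: if `s, t ∈ I` and `s ≤ r ≤ t` then `r ∈ I`. -/
def IntervalConvex (I : Set P) : Prop :=
  ∀ ⦃s r t : P⦄, s ∈ I → t ∈ I → s ≤ r → r ≤ t → r ∈ I

/-- An interval in a poset: a convex subset any two of whose points are joined by a
zigzag of comparable points inside the subset. -/
def IsInterval (I : Set P) : Prop :=
  IntervalConvex I ∧
  ∀ s ∈ I, ∀ t ∈ I,
    Relation.ReflTransGen (fun u v : P => u ∈ I ∧ v ∈ I ∧ (u ≤ v ∨ v ≤ u)) s t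

/-- The value of the interval module `𝟙^I` at `a`: a copy of `𝕜` if `a ∈ I`, and `0`
otherwise, realised as a submodule of `𝕜`. -/
def intervalSubmodule (𝕜 : Type v) [Field 𝕜] (I : Set P) (a : P) : Submodule 𝕜 𝕜 where
  carrier := {x : 𝕜 | a ∉ I → x = 0}
  zero_mem' := fun _ => rfl
  add_mem' := by
    intro x y hx hy h
    rw [hx h, hy h, add_zero]
  smul_mem' := by
    intro c x hx h
    rw [smul_eq_mul, hx h, mul_zero]

open Classical in
/-- The internal morphisms of the interval module: the identity whenever possible. -/
noncomputable def intervalMap (𝕜 : Type v) [Field 𝕜] (I : Set P) {a b : P} (_ : a ≤ b) :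
    intervalSubmodule 𝕜 I a →ₗ[𝕜] intervalSubmodule 𝕜 I b :=
  if h : a ∈ I ∧ b ∈ I then
    { toFun := fun x => ⟨x.1, fun hb => absurd h.2 hb⟩
      map_add' := fun x y => rfl
      map_smul' := fun c x => rfl }
  else 0

lemma intervalSubmodule_eq_zero {I : Set P} {a : P} (ha : a ∉ I)
    (x : intervalSubmodule 𝕜 I a) : (x : 𝕜) = 0 := x.2 ha

/-- The interval module `𝟙^I` of a convex subset `I` of the poset `P`. -/
noncomputable def intervalModule (𝕜 : Type v) [Field 𝕜] (I : Set P) (hconv : IntervalConvex I) :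
    PersistenceModule P 𝕜 where
  obj a := intervalSubmodule 𝕜 I a
  map hab := intervalMap 𝕜 I hab
  map_id a := by
    ext x
    by_cases h : a ∈ I
    · simp [intervalMap, h]
    · simp only [intervalMap, LinearMap.id_coe, id_eq]
      rw [dif_neg (by tauto)]
      simp [LinearMap.zero_apply, (x.2 h).symm]
  map_comp {a b c} hab hbc := by
    ext x
    by_cases hac : a ∈ I ∧ c ∈ I
    · have hb : b ∈ I := hconv hac.1 hac.2 hab hbc
      simp only [intervalMap, LinearMap.coe_comp, Function.comp_apply]
      rw [dif_pos hac, dif_pos (⟨hac.1, hb⟩ : a ∈ I ∧ b ∈ I),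
        dif_pos (⟨hb, hac.2⟩ : b ∈ I ∧ c ∈ I)]
      rfl
    · simp only [intervalMap, LinearMap.coe_comp, Function.comp_apply]
      rw [dif_neg hac]
      simp only [LinearMap.zero_apply, ZeroMemClass.coe_zero]
      by_cases ha : a ∈ I
      · have hc : c ∉ I := fun hc => hac ⟨ha, hc⟩
        exact ((intervalMap 𝕜 I hbc (intervalMap 𝕜 I hab x)).2 hc).symm
      · have hx : x = 0 := Subtype.ext (x.2 ha)
        rw [hx]
        simp
end PersistenceModule
namespace PersistenceModule

variable {P : Type u} [Preorder P] {𝕜 : Type v} [Field 𝕜]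

/-- Direct sum of a family of persistence modules. -/
noncomputable def dirSum {ι : Type w} (Ms : ι → PersistenceModule P 𝕜) :
    PersistenceModule P 𝕜 where
  obj a := Π₀ i, (Ms i).obj a
  map hab := DFinsupp.mapRange.linearMap (fun i => (Ms i).map hab)
  map_id a := by
    have h : (fun i => (Ms i).map (le_refl a)) = fun i => LinearMap.id := by
      funext i; exact (Ms i).map_id a
    show DFinsupp.mapRange.linearMap (fun i => (Ms i).map (le_refl a)) = LinearMap.id
    rw [h, DFinsupp.mapRange.linearMap_id]
  map_comp {a b c} hab hbc := by
    have h : (fun i => (Ms i).map (le_trans hab hbc)) =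
        fun i => ((Ms i).map hbc).comp ((Ms i).map hab) := by
      funext i; exact (Ms i).map_comp hab hbc
    show DFinsupp.mapRange.linearMap (fun i => (Ms i).map (le_trans hab hbc)) =
      (DFinsupp.mapRange.linearMap (fun i => (Ms i).map hbc)).comp
        (DFinsupp.mapRange.linearMap (fun i => (Ms i).map hab))
    rw [h, DFinsupp.mapRange.linearMap_comp]

/-- An isomorphism of persistence modules: a natural family of linear equivalences. -/
structure PersIso (M N : PersistenceModule P 𝕜) where
  e : ∀ a : P, M.obj a ≃ₗ[𝕜] N.obj a
  comm : ∀ {a b : P} (hab : a ≤ b) (x : M.obj a), e b (M.map hab x) = N.map hab (e a x)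

/-- The zero persistence module. -/
def zeroMod (P : Type u) [Preorder P] (𝕜 : Type v) [Field 𝕜] : PersistenceModule P 𝕜 where
  obj _ := PUnit
  map _ := 0
  map_id _ := Subsingleton.elim _ _
  map_comp _ _ := Subsingleton.elim _ _

/-- Reindexing (pullback) of a persistence module along a monotone map. -/
def reindex {Q : Type w} [Preorder Q] (φ : Q → P) (hφ : Monotone φ)
    (M : PersistenceModule P 𝕜) : PersistenceModule Q 𝕜 where
  obj a := M.obj (φ a)
  map hab := M.map (hφ hab)
  map_id a := M.map_id (φ a)
  map_comp hab hbc := M.map_comp (hφ hab) (hφ hbc)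

/-- The single parameter persistence landscape
`λ(k, t) = sup { h ≥ 0 : β^{t-h, t+h} ≥ k }` (with `sup ∅ = 0`). -/
noncomputable def landscape1 (M : PersistenceModule ℝ 𝕜) (k : ℕ) (t : ℝ) : ℝ≥0∞ :=
  sSup (ENNReal.ofReal ''
    {h : ℝ | ∃ hh : 0 ≤ h, (k : Cardinal) ≤ M.rankInv (show t - h ≤ t + h by linarith)})

/-- The `k`-th largest value of the multiset of values of `f`. -/
noncomputable def kmax {ι : Type w} (f : ι → ℝ≥0∞) (k : ℕ) : ℝ≥0∞ :=
  sSup {ε : ℝ≥0∞ | ∃ s : Finset ι, s.card = k ∧ ∀ j ∈ s, ε ≤ f j}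

end PersistenceModule

namespace PersistenceModule

variable {n : ℕ}

/-- An `ε`-matching between two barcodes `{I_j}` and `{I'_κ}`: a partial bijection
matching intervals whose interval modules are within interleaving distance `ε`, such
that all unmatched interval modules are within interleaving distance `ε` of `0`. -/
def IsEpsMatching (𝕜 : Type v) [Field 𝕜] {J K : Type}
    (I : J → Set (Fin n → ℝ)) (I' : K → Set (Fin n → ℝ))
    (hI : ∀ j, IntervalConvex (I j)) (hI' : ∀ κ, IntervalConvex (I' κ))
    (ε : ℝ≥0∞) : Prop :=
  ∃ (J' : Set J) (K' : Set K) (e : J' ≃ K'),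
    (∀ j : J', interleavingDist (intervalModule 𝕜 (I j) (hI j))
        (intervalModule 𝕜 (I' (e j)) (hI' (e j))) ≤ ε) ∧
    (∀ j : J, j ∉ J' → interleavingDist (intervalModule 𝕜 (I j) (hI j))
        (zeroMod.{0, v, v} (Fin n → ℝ) 𝕜) ≤ ε) ∧
    (∀ κ : K, κ ∉ K' → interleavingDist (zeroMod.{0, v, v} (Fin n → ℝ) 𝕜)
        (intervalModule 𝕜 (I' κ) (hI' κ)) ≤ ε)

/-- The bottleneck distance between two barcodes: the infimum of `ε ≥ 0` such that
the barcodes admit an `ε`-matching. -/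
noncomputable def bottleneckDist (𝕜 : Type v) [Field 𝕜] {J K : Type}
    (I : J → Set (Fin n → ℝ)) (I' : K → Set (Fin n → ℝ))
    (hI : ∀ j, IntervalConvex (I j)) (hI' : ∀ κ, IntervalConvex (I' κ)) : ℝ≥0∞ :=
  sInf {ε : ℝ≥0∞ | IsEpsMatching 𝕜 I I' hI hI' ε}

/-! A direct sum of interleavings along a partial bijection, with the zero map on unmatched
summands, is again an interleaving, which gives `d ≤ d_B`.  An interleaving need not be of this
diagonal form: for the two barcodes of three rectangles below, a pair of mutually inverse matrices,
whose nonzero entries sit where a morphism of degree `1` exists, defines a `1`-interleaving.  On the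
other hand, every rectangle of the first barcode is at distance at least `3` from `0`, and two of
them are at distance at least `3` from every rectangle of the second barcode except one, for which
they would compete in a matching of cost less than `3`. -/

section Interleaving

variable {P : Type u} [Preorder P] {𝕜 : Type v} [Field 𝕜] {Γ Λ Γ' Λ' : P → P}
  {hΓ : Monotone Γ} {hΓi : ∀ x, x ≤ Γ x} {hΛ : Monotone Λ} {hΛi : ∀ x, x ≤ Λ x}
  {hΓ' : Monotone Γ'} {hΛ' : Monotone Λ'} {M N M' N' : PersistenceModule P 𝕜}

lemma map_map_apply (M : PersistenceModule P 𝕜) {a b c : P} (hab : a ≤ b) (hbc : b ≤ c)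
    (x : M.obj a) : M.map hbc (M.map hab x) = M.map (hab.trans hbc) x := by
  rw [M.map_comp hab hbc, LinearMap.comp_apply]

lemma PersIso.symm_apply_map (e : PersIso M N) {a b : P} (hab : a ≤ b) (y : N.obj a) :
    (e.e b).symm (N.map hab y) = M.map hab ((e.e a).symm y) := by
  rw [LinearEquiv.symm_apply_eq, e.comm, LinearEquiv.apply_symm_apply]

/-- A morphism of degree `Γ`, that is, a natural transformation from `M` to `N` reindexed along
`Γ`. An interleaving consists of two such morphisms. -/
structure ShiftHom (M N : PersistenceModule P 𝕜) (Γ : P → P) (hΓ : Monotone Γ) where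
  app : ∀ a : P, M.obj a →ₗ[𝕜] N.obj (Γ a)
  naturality : ∀ {a b : P} (hab : a ≤ b) (x : M.obj a),
    app b (M.map hab x) = N.map (hΓ hab) (app a x)

namespace ShiftHom

/-- Post-composition with the internal maps `N (Γ a) → N (Γ' a)`, raising the degree. -/
def enlarge (f : ShiftHom M N Γ hΓ) (hΓ' : Monotone Γ') (h : ∀ x, Γ x ≤ Γ' x) :
    ShiftHom M N Γ' hΓ' where
  app a := N.map (h a) ∘ₗ f.app a
  naturality hab x := by
    simp only [LinearMap.comp_apply, f.naturality, map_map_apply]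

/-- Conjugation of a shifted morphism by isomorphisms. -/
def conj (f : ShiftHom M' N' Γ hΓ) (eM : PersIso M M') (eN : PersIso N N') :
    ShiftHom M N Γ hΓ where
  app a := (eN.e (Γ a)).symm ∘ₗ f.app a ∘ₗ eM.e a
  naturality hab x := by
    simp only [LinearMap.comp_apply, LinearEquiv.coe_coe, eM.comm, f.naturality,
      eN.symm_apply_map]

instance : Zero (ShiftHom M N Γ hΓ) where
  zero := { app := 0, naturality := fun _ _ => (map_zero _).symm }

end ShiftHom

namespace Interleaving

/-- An interleaving, assembled from its two shifted morphisms. -/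
def ofShiftHoms (f : ShiftHom M N Γ hΓ) (g : ShiftHom N M Λ hΛ)
    (hgf : ∀ a, g.app (Γ a) ∘ₗ f.app a = M.map ((hΓi a).trans (hΛi (Γ a))))
    (hfg : ∀ a, f.app (Λ a) ∘ₗ g.app a = N.map ((hΛi a).trans (hΓi (Λ a)))) :
    Interleaving M N Γ Λ hΓ hΓi hΛ hΛi where
  φ := f.app
  ψ := g.app
  φ_nat hab := LinearMap.ext (f.naturality hab)
  ψ_nat hab := LinearMap.ext (g.naturality hab)
  comm₁ := hgf
  comm₂ := hfg

/-- The interleaving with the roles of the two modules exchanged. -/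
def symm (F : Interleaving M N Γ Λ hΓ hΓi hΛ hΛi) : Interleaving N M Λ Γ hΛ hΛi hΓ hΓi where
  φ := F.ψ
  ψ := F.φ
  φ_nat := F.ψ_nat
  ψ_nat := F.φ_nat
  comm₁ := F.comm₂
  comm₂ := F.comm₁

/-- The shifted morphism `φ` of an interleaving; `ψ` is obtained from `Interleaving.symm`. -/
def toShiftHom (F : Interleaving M N Γ Λ hΓ hΓi hΛ hΛi) : ShiftHom M N Γ hΓ where
  app := F.φ
  naturality hab := LinearMap.congr_fun (F.φ_nat hab)

lemma symm_app_app (F : Interleaving M N Γ Λ hΓ hΓi hΛ hΛi) (a : P) (x : M.obj a) :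
    F.symm.toShiftHom.app (Γ a) (F.toShiftHom.app a x) =
      M.map ((hΓi a).trans (hΛi (Γ a))) x :=
  LinearMap.congr_fun (F.comm₁ a) x

lemma map_eq_zero_of_subsingleton (F : Interleaving M N Γ Λ hΓ hΓi hΛ hΛi) (a : P)
    [Subsingleton (N.obj (Γ a))] : M.map ((hΓi a).trans (hΛi (Γ a))) = 0 := by
  ext x
  rw [← F.symm_app_app, Subsingleton.elim (F.toShiftHom.app a x) 0, map_zero,
    LinearMap.zero_apply]

lemma enlarge_symm_comp_enlarge (F : Interleaving M N Γ Λ hΓ hΓi hΛ hΛi)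
    (hΓΓ' : ∀ x, Γ x ≤ Γ' x) (hΛΛ' : ∀ x, Λ x ≤ Λ' x) (a : P) :
    (F.symm.toShiftHom.enlarge hΛ' hΛΛ').app (Γ' a) ∘ₗ (F.toShiftHom.enlarge hΓ' hΓΓ').app a =
      M.map (((hΓi a).trans (hΓΓ' a)).trans ((hΛi (Γ' a)).trans (hΛΛ' (Γ' a)))) := by
  ext x
  simp only [ShiftHom.enlarge, LinearMap.comp_apply, ShiftHom.naturality, symm_app_app,
    map_map_apply]

/-- Interleavings may be shifted further: this is why an interleaving distance below `δ` yields
an interleaving by the diagonal shift `δ`. -/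
def enlarge (F : Interleaving M N Γ Λ hΓ hΓi hΛ hΛi)
    (hΓΓ' : ∀ x, Γ x ≤ Γ' x) (hΛΛ' : ∀ x, Λ x ≤ Λ' x) :
    Interleaving M N Γ' Λ' hΓ' (fun x => (hΓi x).trans (hΓΓ' x))
      hΛ' (fun x => (hΛi x).trans (hΛΛ' x)) :=
  ofShiftHoms (F.toShiftHom.enlarge hΓ' hΓΓ') (F.symm.toShiftHom.enlarge hΛ' hΛΛ')
    (F.enlarge_symm_comp_enlarge hΓΓ' hΛΛ') (F.symm.enlarge_symm_comp_enlarge hΛΛ' hΓΓ')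

lemma conj_symm_comp_conj (F : Interleaving M' N' Γ Λ hΓ hΓi hΛ hΛi)
    (eM : PersIso M M') (eN : PersIso N N') (a : P) :
    (F.symm.toShiftHom.conj eN eM).app (Γ a) ∘ₗ (F.toShiftHom.conj eM eN).app a =
      M.map ((hΓi a).trans (hΛi (Γ a))) := by
  ext x
  simp only [ShiftHom.conj, LinearMap.comp_apply, LinearEquiv.coe_coe,
    LinearEquiv.apply_symm_apply, symm_app_app, eM.symm_apply_map, LinearEquiv.symm_apply_apply]

/-- Transport of an interleaving along isomorphisms of the two modules. -/
def conj (F : Interleaving M' N' Γ Λ hΓ hΓi hΛ hΛi) (eM : PersIso M M') (eN : PersIso N N') :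
    Interleaving M N Γ Λ hΓ hΓi hΛ hΛi :=
  ofShiftHoms (F.toShiftHom.conj eM eN) (F.symm.toShiftHom.conj eN eM)
    (F.conj_symm_comp_conj eM eN) (F.symm.conj_symm_comp_conj eN eM)

end Interleaving

end Interleaving

section DirSum

variable {P : Type u} [Preorder P] {𝕜 : Type v} [Field 𝕜] {Γ Λ : P → P}
  {hΓ : Monotone Γ} {hΓi : ∀ x, x ≤ Γ x} {hΛ : Monotone Λ} {hΛi : ∀ x, x ≤ Λ x}
  {J K : Type*} [DecidableEq J] [DecidableEq K]
  {A : J → PersistenceModule P 𝕜} {B : K → PersistenceModule P 𝕜} {N : PersistenceModule P 𝕜}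

/-- The inclusion of a summand into a direct sum of persistence modules. -/
def dirSumIncl (A : J → PersistenceModule P 𝕜) (j : J) (a : P) :
    (A j).obj a →ₗ[𝕜] (dirSum A).obj a :=
  DFinsupp.lsingle (M := fun i => (A i).obj a) j

lemma dirSum_map_incl (j : J) {a b : P} (hab : a ≤ b) (x : (A j).obj a) :
    (dirSum A).map hab (dirSumIncl A j a x) = dirSumIncl A j b ((A j).map hab x) :=
  DFinsupp.mapRange_single (hf := fun i => map_zero ((A i).map hab))

variable {V : Type*} [AddCommGroup V] [Module 𝕜 V] {a : P}

lemma dirSum_hom_ext {f g : (dirSum A).obj a →ₗ[𝕜] V}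
    (h : ∀ j x, f (dirSumIncl A j a x) = g (dirSumIncl A j a x)) : f = g :=
  DFinsupp.lhom_ext (M := fun i => (A i).obj a) h

/-- The linear map out of a direct sum given by its restrictions to the summands. -/
noncomputable def dirSumDesc (f : ∀ j, (A j).obj a →ₗ[𝕜] V) : (dirSum A).obj a →ₗ[𝕜] V :=
  DFinsupp.lsum ℕ (M := fun i => (A i).obj a) f

lemma dirSumDesc_incl (f : ∀ j, (A j).obj a →ₗ[𝕜] V) (j : J) (x : (A j).obj a) :
    dirSumDesc f (dirSumIncl A j a x) = f j x :=
  DFinsupp.lsum_single (M := fun i => (A i).obj a) ..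

namespace ShiftHom

/-- The shifted morphism out of a direct sum given by its restrictions to the summands. -/
noncomputable def desc (f : ∀ j, ShiftHom (A j) N Γ hΓ) : ShiftHom (dirSum A) N Γ hΓ where
  app a := dirSumDesc fun j => (f j).app a
  naturality {a b} hab x := by
    suffices h : dirSumDesc (fun j => (f j).app b) ∘ₗ (dirSum A).map hab =
        N.map (hΓ hab) ∘ₗ dirSumDesc fun j => (f j).app a from
      LinearMap.congr_fun h x
    refine dirSum_hom_ext fun j y => ?_
    simp only [LinearMap.comp_apply, dirSum_map_incl, dirSumDesc_incl, (f j).naturality hab]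

lemma desc_app_incl (f : ∀ j, ShiftHom (A j) N Γ hΓ) (j : J) (a : P) (x : (A j).obj a) :
    (desc f).app a (dirSumIncl A j a x) = (f j).app a x :=
  dirSumDesc_incl (fun j => (f j).app a) j x

/-- A shifted morphism into a summand, followed by the inclusion into the direct sum. -/
noncomputable def intoSummand {M : PersistenceModule P 𝕜} (k : K) (f : ShiftHom M (B k) Γ hΓ) :
    ShiftHom M (dirSum B) Γ hΓ where
  app a := dirSumIncl B k (Γ a) ∘ₗ f.app a
  naturality hab x := by
    simp only [LinearMap.comp_apply, f.naturality, dirSum_map_incl]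

variable {S : Set J} {T : Set K} [DecidablePred (· ∈ S)]

/-- The morphism of direct sums induced by morphisms between matched summands, and zero on the
unmatched ones. The targets are indexed by proofs of `e j = k`, which avoids transporting along
`e (e.symm k) = k` when passing to `e.symm`. -/
noncomputable def ofMatching (e : S ≃ T)
    (f : ∀ (j : S) (k : T), e j = k → ShiftHom (A j) (B k) Γ hΓ) :
    ShiftHom (dirSum A) (dirSum B) Γ hΓ :=
  desc fun j => if h : j ∈ S then intoSummand (e ⟨j, h⟩ : K) (f ⟨j, h⟩ _ rfl) else 0

lemma ofMatching_app_incl (e : S ≃ T)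
    (f : ∀ (j : S) (k : T), e j = k → ShiftHom (A j) (B k) Γ hΓ) {j : S} {k : T} (h : e j = k)
    (a : P) (x : (A j).obj a) :
    (ofMatching e f).app a (dirSumIncl A j a x) = dirSumIncl B k (Γ a) ((f j k h).app a x) := by
  subst h
  rw [ofMatching, desc_app_incl, dif_pos j.2]
  rfl

lemma ofMatching_app_incl_of_notMem (e : S ≃ T)
    (f : ∀ (j : S) (k : T), e j = k → ShiftHom (A j) (B k) Γ hΓ) {j : J} (hj : j ∉ S)
    (a : P) (x : (A j).obj a) :
    (ofMatching e f).app a (dirSumIncl A j a x) = 0 := by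
  rw [ofMatching, desc_app_incl, dif_neg hj]
  rfl

end ShiftHom

namespace Interleaving

variable {S : Set J} {T : Set K} [DecidablePred (· ∈ S)] [DecidablePred (· ∈ T)]

lemma ofMatching_symm_comp_ofMatching (e : S ≃ T)
    (F : ∀ (j : S) (k : T), e j = k → Interleaving (A j) (B k) Γ Λ hΓ hΓi hΛ hΛi)
    (hA : ∀ j ∉ S, ∀ a, (A j).map ((hΓi a).trans (hΛi (Γ a))) = 0)
    (a : P) :
    (ShiftHom.ofMatching e.symm fun k j h =>
        (F j k (e.symm_apply_eq.1 h).symm).symm.toShiftHom).app (Γ a) ∘ₗ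
      (ShiftHom.ofMatching e fun j k h => (F j k h).toShiftHom).app a =
      (dirSum A).map ((hΓi a).trans (hΛi (Γ a))) := by
  refine dirSum_hom_ext fun j x => ?_
  rw [LinearMap.comp_apply, dirSum_map_incl]
  by_cases hj : j ∈ S
  · lift j to S using hj
    rw [ShiftHom.ofMatching_app_incl e _ rfl,
      ShiftHom.ofMatching_app_incl e.symm _ (e.symm_apply_apply j), symm_app_app]
  · rw [ShiftHom.ofMatching_app_incl_of_notMem e _ hj, hA j hj, map_zero, LinearMap.zero_apply,
      map_zero]

/-- The direct sum of interleavings along a partial bijection `e`, when the unmatched summands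
are trivial up to the shift. -/
noncomputable def ofMatching (e : S ≃ T)
    (F : ∀ (j : S) (k : T), e j = k → Interleaving (A j) (B k) Γ Λ hΓ hΓi hΛ hΛi)
    (hA : ∀ j ∉ S, ∀ a, (A j).map ((hΓi a).trans (hΛi (Γ a))) = 0)
    (hB : ∀ k ∉ T, ∀ a, (B k).map ((hΛi a).trans (hΓi (Λ a))) = 0) :
    Interleaving (dirSum A) (dirSum B) Γ Λ hΓ hΓi hΛ hΛi :=
  ofShiftHoms (ShiftHom.ofMatching e fun j k h => (F j k h).toShiftHom)
    (ShiftHom.ofMatching e.symm fun k j h =>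
      (F j k (e.symm_apply_eq.1 h).symm).symm.toShiftHom)
    (ofMatching_symm_comp_ofMatching e F hA)
    (ofMatching_symm_comp_ofMatching e.symm
      (fun k j h => (F j k (e.symm_apply_eq.1 h).symm).symm) hB)

end Interleaving

end DirSum

section DiagShift

variable {𝕜 : Type v} [Field 𝕜] {δ : ℝ≥0} {M N M' N' : PersistenceModule (Fin n → ℝ) 𝕜}

/-- The diagonal shift of `ℝⁿ` by `δ`. -/
def diagShift (δ : ℝ≥0) (x : Fin n → ℝ) : Fin n → ℝ := fun i => x i + δ

lemma diagShift_mono (δ : ℝ≥0) : Monotone (diagShift (n := n) δ) :=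
  fun _ _ h i => add_le_add_left (h i) (δ : ℝ)

lemma le_diagShift (δ : ℝ≥0) (x : Fin n → ℝ) : x ≤ diagShift δ x :=
  fun _ => le_add_of_nonneg_right δ.coe_nonneg

lemma norm_diagShift_sub_le (δ : ℝ≥0) (x : Fin n → ℝ) : ‖diagShift δ x - x‖ ≤ δ :=
  (pi_norm_le_iff_of_nonneg δ.coe_nonneg).2 fun _ => by simp [diagShift]

lemma le_diagShift_of_norm_sub_le {x y : Fin n → ℝ} (h : ‖y - x‖ ≤ δ) : y ≤ diagShift δ x :=
  fun i => sub_le_iff_le_add'.1 (((le_abs_self _).trans (norm_le_pi_norm (y - x) i)).trans h)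

/-- A `δ`-interleaving, that is, an interleaving by diagonal shifts. -/
abbrev DiagInterleaving (δ : ℝ≥0) (M N : PersistenceModule (Fin n → ℝ) 𝕜) :=
  Interleaving M N (diagShift δ) (diagShift δ)
    (diagShift_mono δ) (le_diagShift δ) (diagShift_mono δ) (le_diagShift δ)

lemma DiagInterleaving.interleavingDist_le (F : DiagInterleaving δ M N) :
    interleavingDist M N ≤ δ := by
  have size_le : (⨆ x : Fin n → ℝ, ENNReal.ofReal ‖diagShift δ x - x‖) ≤ δ :=
    iSup_le fun x => ENNReal.ofReal_le_of_le_toReal (norm_diagShift_sub_le δ x)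
  exact sInf_le ⟨_, _, _, _, _, _, ⟨F⟩, size_le, size_le⟩

lemma nonempty_diagInterleaving_of_interleavingDist_lt (h : interleavingDist M N < δ) :
    Nonempty (DiagInterleaving δ M N) := by
  obtain ⟨ε, ⟨Γ, Λ, hΓ, hΓi, hΛ, hΛi, ⟨F⟩, hΓε, hΛε⟩, hε⟩ := sInf_lt_iff.1 h
  have le_shift (G : (Fin n → ℝ) → Fin n → ℝ) (hG : (⨆ x, ENNReal.ofReal ‖G x - x‖) ≤ ε)
      (x : Fin n → ℝ) : G x ≤ diagShift δ x := by
    refine le_diagShift_of_norm_sub_le ((ENNReal.ofReal_le_ofReal_iff δ.coe_nonneg).1 ?_)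
    rw [ENNReal.ofReal_coe_nnreal]
    exact ((le_iSup (fun y => ENNReal.ofReal ‖G y - y‖) x).trans hG).trans hε.le
  exact ⟨F.enlarge (le_shift Γ hΓε) (le_shift Λ hΛε)⟩

lemma interleavingDist_le_of_forall_nnreal_gt {ε : ℝ≥0∞}
    (h : ∀ δ : ℝ≥0, ε < δ → Nonempty (DiagInterleaving δ M N)) : interleavingDist M N ≤ ε := by
  by_contra! hlt
  obtain ⟨δ, hεδ, hδ⟩ := ENNReal.lt_iff_exists_nnreal_btwn.1 hlt
  obtain ⟨F⟩ := h δ hεδ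
  exact hδ.not_ge F.interleavingDist_le

lemma interleavingDist_le_of_persIso (eM : PersIso M M') (eN : PersIso N N') :
    interleavingDist M N ≤ interleavingDist M' N' :=
  interleavingDist_le_of_forall_nnreal_gt fun _ hδ =>
    (nonempty_diagInterleaving_of_interleavingDist_lt hδ).map fun F => F.conj eM eN

lemma DiagInterleaving.map_eq_zero
    (F : DiagInterleaving δ M (zeroMod.{0, v, v} (Fin n → ℝ) 𝕜)) (a : Fin n → ℝ) :
    M.map ((le_diagShift δ a).trans (le_diagShift δ _)) = 0 :=
  haveI : Subsingleton ((zeroMod.{0, v, v} (Fin n → ℝ) 𝕜).obj (diagShift δ a)) :=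
    inferInstanceAs (Subsingleton PUnit)
  F.map_eq_zero_of_subsingleton a

variable {J K : Type} {I : J → Set (Fin n → ℝ)} {I' : K → Set (Fin n → ℝ)}
  {hI : ∀ j, IntervalConvex (I j)} {hI' : ∀ κ, IntervalConvex (I' κ)}

lemma IsEpsMatching.interleavingDist_dirSum_le {ε : ℝ≥0∞} (h : IsEpsMatching 𝕜 I I' hI hI' ε) :
    interleavingDist (dirSum fun j => intervalModule 𝕜 (I j) (hI j))
      (dirSum fun κ => intervalModule 𝕜 (I' κ) (hI' κ)) ≤ ε := by
  classical
  obtain ⟨S, T, e, matched, unmatched, unmatched'⟩ := h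
  refine interleavingDist_le_of_forall_nnreal_gt fun δ hδ => ?_
  have nonempty_matched (j : S) (κ : T) (h : e j = κ) : Nonempty (DiagInterleaving δ
      (intervalModule 𝕜 (I j) (hI j)) (intervalModule 𝕜 (I' κ) (hI' κ))) :=
    h ▸ nonempty_diagInterleaving_of_interleavingDist_lt ((matched j).trans_lt hδ)
  refine ⟨Interleaving.ofMatching e (fun j κ h => (nonempty_matched j κ h).some)
    (fun j hj => ?_) fun κ hκ => ?_⟩
  · obtain ⟨F⟩ :=
      nonempty_diagInterleaving_of_interleavingDist_lt ((unmatched j hj).trans_lt hδ)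
    exact DiagInterleaving.map_eq_zero F
  · obtain ⟨F⟩ :=
      nonempty_diagInterleaving_of_interleavingDist_lt ((unmatched' κ hκ).trans_lt hδ)
    exact DiagInterleaving.map_eq_zero F.symm

theorem interleavingDist_le_bottleneckDist
    (eM : PersIso M (dirSum fun j => intervalModule 𝕜 (I j) (hI j)))
    (eN : PersIso N (dirSum fun κ => intervalModule 𝕜 (I' κ) (hI' κ))) :
    interleavingDist M N ≤ bottleneckDist 𝕜 I I' hI hI' :=
  le_sInf fun _ h => (interleavingDist_le_of_persIso eM eN).trans h.interleavingDist_dirSum_le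

end DiagShift

section IntervalTransfer

variable {P : Type u} [Preorder P] {𝕜 : Type v} [Field 𝕜] {Γ Λ : P → P}
  {hΓ : Monotone Γ} {hΓi : ∀ x, x ≤ Γ x} {hΛ : Monotone Λ} {hΛi : ∀ x, x ≤ Λ x}
  {I I' I'' : Set P} {hI : IntervalConvex I} {hI' : IntervalConvex I'}
  {hI'' : IntervalConvex I''} {a b c : P}

/-- The value in `𝕜` of an element of an interval module. -/
def intervalVal (hI : IntervalConvex I) (a : P) : (intervalModule 𝕜 I hI).obj a →ₗ[𝕜] 𝕜 :=
  (intervalSubmodule 𝕜 I a).subtype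

lemma intervalVal_injective (hI : IntervalConvex I) (a : P) :
    Function.Injective (intervalVal (𝕜 := 𝕜) hI a) :=
  Subtype.val_injective

lemma intervalVal_eq_zero (ha : a ∉ I) (x : (intervalModule 𝕜 I hI).obj a) :
    intervalVal hI a x = 0 :=
  intervalSubmodule_eq_zero ha x

/-- The element of an interval module with a given value, at a point of the interval. -/
def intervalOfVal (hI : IntervalConvex I) (ha : a ∈ I) : 𝕜 →ₗ[𝕜] (intervalModule 𝕜 I hI).obj a :=
  LinearMap.id.codRestrict (intervalSubmodule 𝕜 I a) fun _ ha' => absurd ha ha'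

lemma intervalVal_ofVal (ha : a ∈ I) (x : 𝕜) : intervalVal hI a (intervalOfVal hI ha x) = x :=
  rfl

lemma intervalVal_map (hab : a ≤ b) (ha : a ∈ I) (hb : b ∈ I)
    (x : (intervalModule 𝕜 I hI).obj a) :
    intervalVal hI b ((intervalModule 𝕜 I hI).map hab x) = intervalVal hI a x := by
  simp only [intervalModule, intervalMap, dif_pos (And.intro ha hb)]
  rfl

lemma intervalModule_hom_ext
    {f g : (intervalModule 𝕜 I hI).obj a →ₗ[𝕜] (intervalModule 𝕜 I' hI').obj b}
    (h : a ∈ I → b ∈ I' → ∀ x, intervalVal hI' b (f x) = intervalVal hI' b (g x)) : f = g := by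
  ext x
  apply intervalVal_injective
  by_cases hb : b ∈ I'
  · by_cases ha : a ∈ I
    · exact h ha hb x
    · have hx : x = 0 :=
        intervalVal_injective hI a ((intervalVal_eq_zero ha x).trans (map_zero _).symm)
      rw [hx, map_zero f, map_zero g]
  · rw [intervalVal_eq_zero hb, intervalVal_eq_zero hb]

lemma intervalModule_map_ne_zero (hab : a ≤ b) (ha : a ∈ I) (hb : b ∈ I) :
    (intervalModule 𝕜 I hI).map hab ≠ 0 := by
  intro h
  have map_one := intervalVal_map hab ha hb (intervalOfVal hI ha (1 : 𝕜))
  rw [h, LinearMap.zero_apply, map_zero, intervalVal_ofVal] at map_one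
  exact zero_ne_one map_one

lemma Interleaving.mem_of_mem
    (F : Interleaving (intervalModule 𝕜 I hI) (intervalModule 𝕜 I' hI') Γ Λ hΓ hΓi hΛ hΛi)
    (ha : a ∈ I) (ha' : Λ (Γ a) ∈ I) : Γ a ∈ I' := by
  by_contra hΓa
  have : Subsingleton ((intervalModule 𝕜 I' hI').obj (Γ a)) := ⟨fun x y =>
    intervalVal_injective hI' _
      ((intervalVal_eq_zero hΓa x).trans (intervalVal_eq_zero hΓa y).symm)⟩
  exact intervalModule_map_ne_zero _ ha ha' (F.map_eq_zero_of_subsingleton a)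

open Classical in
/-- The linear map between values of two interval modules that is the identity of `𝕜` whenever
possible; it extends the internal morphisms of an interval module to two different intervals. -/
noncomputable def intervalTransfer (hI : IntervalConvex I) (hI' : IntervalConvex I') (a b : P) :
    (intervalModule 𝕜 I hI).obj a →ₗ[𝕜] (intervalModule 𝕜 I' hI').obj b :=
  if hb : b ∈ I' then intervalOfVal hI' hb ∘ₗ intervalVal hI a else 0

lemma intervalVal_transfer (hb : b ∈ I') (x : (intervalModule 𝕜 I hI).obj a) :
    intervalVal hI' b (intervalTransfer hI hI' a b x) = intervalVal hI a x := by
  rw [intervalTransfer, dif_pos hb, LinearMap.comp_apply, intervalVal_ofVal]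

lemma intervalModule_map_eq_transfer (hab : a ≤ b) :
    (intervalModule 𝕜 I hI).map hab = intervalTransfer hI hI a b :=
  intervalModule_hom_ext fun ha hb x => by
    rw [intervalVal_map hab ha hb, intervalVal_transfer hb]

lemma intervalTransfer_transfer (h : a ∈ I → c ∈ I'' → b ∈ I')
    (x : (intervalModule 𝕜 I hI).obj a) :
    intervalTransfer hI' hI'' b c (intervalTransfer hI hI' a b x) =
      intervalTransfer hI hI'' a c x := by
  suffices h : intervalTransfer hI' hI'' b c ∘ₗ intervalTransfer hI hI' a b =
      intervalTransfer hI hI'' a c from LinearMap.congr_fun h x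
  refine intervalModule_hom_ext fun ha hc y => ?_
  rw [LinearMap.comp_apply, intervalVal_transfer hc, intervalVal_transfer (h ha hc),
    intervalVal_transfer hc]

lemma IntervalConvex.mem_of_mem_closures (hI : IntervalConvex I) (ha : a ∈ upperClosure I)
    (ha' : a ∈ lowerClosure I) : a ∈ I := by
  obtain ⟨s, hs, hsa⟩ := ha
  obtain ⟨t, ht, hat⟩ := ha'
  exact hI hs ht hsa hat

/-- The condition on `I` and `I'` under which the identity of `𝕜` at the points `a ∈ I` with
`Γ a ∈ I'` defines a morphism `𝟙^I → 𝟙^{I'}` of degree `Γ`: shifted by `Γ`, the interval `I`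
starts and ends no earlier than `I'`. -/
structure ShiftPrecedes (Γ : P → P) (I I' : Set P) : Prop where
  mem_upperClosure : ∀ ⦃a⦄, a ∈ I → Γ a ∈ upperClosure I'
  mem_lowerClosure : ∀ ⦃a⦄, Γ a ∈ I' → a ∈ lowerClosure I

namespace ShiftPrecedes

lemma transfer_map (h : ShiftPrecedes Γ I I') (hΓ : Monotone Γ) (hab : a ≤ b)
    (x : (intervalModule 𝕜 I hI).obj a) :
    intervalTransfer hI hI' b (Γ b) ((intervalModule 𝕜 I hI).map hab x) =
      (intervalModule 𝕜 I' hI').map (hΓ hab) (intervalTransfer hI hI' a (Γ a) x) := by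
  have mem_source (ha : a ∈ I) (hb : Γ b ∈ I') : b ∈ I :=
    hI.mem_of_mem_closures ⟨a, ha, hab⟩ (h.mem_lowerClosure hb)
  have mem_target (ha : a ∈ I) (hb : Γ b ∈ I') : Γ a ∈ I' :=
    hI'.mem_of_mem_closures (h.mem_upperClosure ha) ⟨Γ b, hb, hΓ hab⟩
  rw [intervalModule_map_eq_transfer, intervalModule_map_eq_transfer,
    intervalTransfer_transfer mem_source, intervalTransfer_transfer mem_target]

lemma transfer_transfer (h : ShiftPrecedes Γ I I') (h' : ShiftPrecedes Λ I' I'')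
    (x : (intervalModule 𝕜 I hI).obj a) :
    intervalTransfer hI' hI'' (Γ a) (Λ (Γ a)) (intervalTransfer hI hI' a (Γ a) x) =
      intervalTransfer hI hI'' a (Λ (Γ a)) x :=
  intervalTransfer_transfer (fun ha hc =>
    hI'.mem_of_mem_closures (h.mem_upperClosure ha) (h'.mem_lowerClosure hc)) x

end ShiftPrecedes

end IntervalTransfer

section IntervalMatrix

variable {P : Type u} [Preorder P] {𝕜 : Type v} [Field 𝕜] {Γ Λ : P → P}
  {hΓ : Monotone Γ} {hΓi : ∀ x, x ≤ Γ x} {hΛ : Monotone Λ} {hΛi : ∀ x, x ≤ Λ x}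
  {J K : Type*} [Fintype K] [DecidableEq J] [DecidableEq K]
  {I : J → Set P} {I' : K → Set P} {hI : ∀ j, IntervalConvex (I j)}
  {hI' : ∀ k, IntervalConvex (I' k)} {C : Matrix K J 𝕜} {D : Matrix J K 𝕜}

namespace ShiftHom

/-- The morphism from an interval module to a sum of interval modules with components `c k`. -/
noncomputable def column {S : Set P} (hS : IntervalConvex S) (hI' : ∀ k, IntervalConvex (I' k))
    (hΓ : Monotone Γ) (c : K → 𝕜) (hc : ∀ k, c k ≠ 0 → ShiftPrecedes Γ S (I' k)) :
    ShiftHom (intervalModule 𝕜 S hS) (dirSum fun k => intervalModule 𝕜 (I' k) (hI' k)) Γ hΓ where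
  app a := ∑ k, c k • (dirSumIncl (fun k => intervalModule 𝕜 (I' k) (hI' k)) k (Γ a) ∘ₗ
    intervalTransfer hS (hI' k) a (Γ a))
  naturality {a b} hab x := by
    simp only [LinearMap.sum_apply, LinearMap.smul_apply, LinearMap.comp_apply, map_sum, map_smul,
      dirSum_map_incl]
    refine Finset.sum_congr rfl fun k _ => ?_
    rcases eq_or_ne (c k) 0 with hk | hk
    · rw [hk, zero_smul, zero_smul]
    · rw [(hc k hk).transfer_map hΓ hab]

/-- The morphism between sums of interval modules given by a matrix of scalars. -/
noncomputable def ofMatrix (hI : ∀ j, IntervalConvex (I j)) (hI' : ∀ k, IntervalConvex (I' k))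
    (hΓ : Monotone Γ) (C : Matrix K J 𝕜)
    (hC : ∀ k j, C k j ≠ 0 → ShiftPrecedes Γ (I j) (I' k)) :
    ShiftHom (dirSum fun j => intervalModule 𝕜 (I j) (hI j))
      (dirSum fun k => intervalModule 𝕜 (I' k) (hI' k)) Γ hΓ :=
  desc fun j => column (hI j) hI' hΓ (fun k => C k j) fun k => hC k j

lemma ofMatrix_app_incl (hC : ∀ k j, C k j ≠ 0 → ShiftPrecedes Γ (I j) (I' k)) (j : J) (a : P)
    (x : (intervalModule 𝕜 (I j) (hI j)).obj a) :
    (ofMatrix hI hI' hΓ C hC).app a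
        (dirSumIncl (fun j => intervalModule 𝕜 (I j) (hI j)) j a x) =
      ∑ k, C k j • dirSumIncl (fun k => intervalModule 𝕜 (I' k) (hI' k)) k (Γ a)
        (intervalTransfer (hI j) (hI' k) a (Γ a) x) := by
  rw [ofMatrix, desc_app_incl]
  simp only [column, LinearMap.sum_apply, LinearMap.smul_apply, LinearMap.comp_apply]

variable [Fintype J]

lemma ofMatrix_comp_ofMatrix (hΓi : ∀ x, x ≤ Γ x) (hΛi : ∀ x, x ≤ Λ x)
    (hC : ∀ k j, C k j ≠ 0 → ShiftPrecedes Γ (I j) (I' k))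
    (hD : ∀ j k, D j k ≠ 0 → ShiftPrecedes Λ (I' k) (I j)) (hDC : D * C = 1) (a : P) :
    (ofMatrix hI' hI hΛ D hD).app (Γ a) ∘ₗ (ofMatrix hI hI' hΓ C hC).app a =
      (dirSum fun j => intervalModule 𝕜 (I j) (hI j)).map ((hΓi a).trans (hΛi (Γ a))) := by
  refine dirSum_hom_ext fun j x => ?_
  let incl (l : J) := dirSumIncl (fun j => intervalModule 𝕜 (I j) (hI j)) l (Λ (Γ a))
  have entry (k : K) (l : J) :
      C k j • D l k • incl l (intervalTransfer (hI' k) (hI l) (Γ a) (Λ (Γ a))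
        (intervalTransfer (hI j) (hI' k) a (Γ a) x)) =
      (D l k * C k j) • incl l (intervalTransfer (hI j) (hI l) a (Λ (Γ a)) x) := by
    rw [smul_smul, mul_comm]
    rcases eq_or_ne (D l k) 0 with hd | hd
    · rw [hd, zero_mul, zero_smul, zero_smul]
    rcases eq_or_ne (C k j) 0 with hc | hc
    · rw [hc, mul_zero, zero_smul, zero_smul]
    rw [(hC k j hc).transfer_transfer (hD l k hd)]
  calc (ofMatrix hI' hI hΛ D hD).app (Γ a) ((ofMatrix hI hI' hΓ C hC).app a
          (dirSumIncl (fun j => intervalModule 𝕜 (I j) (hI j)) j a x))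
    _ = ∑ k, C k j • ∑ l, D l k • incl l (intervalTransfer (hI' k) (hI l) (Γ a) (Λ (Γ a))
          (intervalTransfer (hI j) (hI' k) a (Γ a) x)) := by
      simp only [ofMatrix_app_incl, map_sum, map_smul, incl]
    _ = ∑ l, (D * C) l j • incl l (intervalTransfer (hI j) (hI l) a (Λ (Γ a)) x) := by
      simp only [Finset.smul_sum, entry, Matrix.mul_apply, Finset.sum_smul]
      exact Finset.sum_comm
    _ = incl j (intervalTransfer (hI j) (hI j) a (Λ (Γ a)) x) := by
      simp only [hDC, Matrix.one_apply, ite_smul, one_smul, zero_smul, Finset.sum_ite_eq',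
        Finset.mem_univ, if_true]
    _ = (dirSum fun j => intervalModule 𝕜 (I j) (hI j)).map ((hΓi a).trans (hΛi (Γ a)))
          (dirSumIncl (fun j => intervalModule 𝕜 (I j) (hI j)) j a x) := by
      rw [dirSum_map_incl, intervalModule_map_eq_transfer]

end ShiftHom

/-- The interleaving of interval decomposable modules defined by a pair of mutually inverse
matrices. -/
noncomputable def Interleaving.ofMatrices [Fintype J]
    (hC : ∀ k j, C k j ≠ 0 → ShiftPrecedes Γ (I j) (I' k))
    (hD : ∀ j k, D j k ≠ 0 → ShiftPrecedes Λ (I' k) (I j)) (hDC : D * C = 1) (hCD : C * D = 1) :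
    Interleaving (dirSum fun j => intervalModule 𝕜 (I j) (hI j))
      (dirSum fun k => intervalModule 𝕜 (I' k) (hI' k)) Γ Λ hΓ hΓi hΛ hΛi :=
  ofShiftHoms (.ofMatrix hI hI' hΓ C hC) (.ofMatrix hI' hI hΛ D hD)
    (ShiftHom.ofMatrix_comp_ofMatrix hΓi hΛi hC hD hDC)
    (ShiftHom.ofMatrix_comp_ofMatrix hΛi hΓi hD hC hCD)

end IntervalMatrix

section OpenBox

variable {𝕜 : Type v} [Field 𝕜] {δ r : ℝ≥0} {u v u' v' : Fin n → ℝ}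

/-- The open rectangle with lower corner `u` and upper corner `v`. -/
def openBox (u v : Fin n → ℝ) : Set (Fin n → ℝ) := {x | ∀ i, x i ∈ Set.Ioo (u i) (v i)}

lemma isInterval_openBox (u v : Fin n → ℝ) : IsInterval (openBox u v) := by
  refine ⟨fun s r t hs ht hsr hrt i => ⟨(hs i).1.trans_le (hsr i), (hrt i).trans_lt (ht i).2⟩,
    fun s hs t ht => ?_⟩
  have inf_mem : s ⊓ t ∈ openBox u v := fun i =>
    ⟨lt_inf_iff.2 ⟨(hs i).1, (ht i).1⟩, inf_le_left.trans_lt (hs i).2⟩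
  exact .tail (.single ⟨hs, inf_mem, .inr inf_le_left⟩) ⟨inf_mem, ht, .inl inf_le_right⟩

/-- The rectangle module with lower corner `u` and upper corner `v`. -/
noncomputable abbrev boxModule (𝕜 : Type v) [Field 𝕜] (u v : Fin n → ℝ) :
    PersistenceModule (Fin n → ℝ) 𝕜 :=
  intervalModule 𝕜 (openBox u v) (isInterval_openBox u v).1

lemma shiftPrecedes_openBox (huv : ∀ i, u i < v i) (huv' : ∀ i, u' i < v' i)
    (hu : ∀ i, u' i ≤ u i + δ) (hv : ∀ i, v' i ≤ v i + δ) :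
    ShiftPrecedes (diagShift δ) (openBox u v) (openBox u' v') where
  mem_upperClosure a ha := by
    have lt_min (i : Fin n) : u' i < min (a i + δ) (v' i) :=
      lt_inf_iff.2 ⟨(hu i).trans_lt (add_lt_add_left (ha i).1 _), huv' i⟩
    choose s hs using fun i => exists_between (lt_min i)
    exact ⟨s, fun i => ⟨(hs i).1, (hs i).2.trans_le (min_le_right _ _)⟩,
      fun i => ((hs i).2.trans_le (min_le_left _ _)).le⟩
  mem_lowerClosure a ha := by
    have max_lt (i : Fin n) : max (a i) (u i) < v i :=
      sup_lt_iff.2 ⟨lt_of_add_lt_add_right ((ha i).2.trans_le (hv i)), huv i⟩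
    choose t ht using fun i => exists_between (max_lt i)
    exact ⟨t, fun i => ⟨(le_max_right _ _).trans_lt (ht i).1, (ht i).2⟩,
      fun i => ((le_max_left _ _).trans_lt (ht i).1).le⟩

lemma mem_openBox_and_diagShift_mem {a : Fin n → ℝ}
    (ha : ∀ i, a i ∈ Set.Ioo (u i) (v i - 2 * δ)) :
    a ∈ openBox u v ∧ diagShift δ (diagShift δ a) ∈ openBox u v := by
  have upper (i : Fin n) : a i + δ + δ < v i := by linarith [(ha i).2]
  refine ⟨fun i => ⟨(ha i).1, by linarith [upper i, δ.coe_nonneg]⟩, fun i => ⟨?_, upper i⟩⟩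
  exact (ha i).1.trans_le ((le_diagShift δ a).trans (le_diagShift δ _) i)

lemma not_diagInterleaving_boxModule_zeroMod (h : ∀ i, u i + 2 * δ < v i)
    (F : DiagInterleaving δ (boxModule 𝕜 u v) (zeroMod.{0, v, v} (Fin n → ℝ) 𝕜)) : False := by
  choose a ha using fun i => exists_between (lt_sub_iff_add_lt.2 (h i))
  obtain ⟨mem, mem_shift⟩ := mem_openBox_and_diagShift_mem ha
  exact intervalModule_map_ne_zero _ mem mem_shift (DiagInterleaving.map_eq_zero F a)

namespace DiagInterleaving

lemma corner_le (F : DiagInterleaving δ (boxModule 𝕜 u v) (boxModule 𝕜 u' v'))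
    (h : ∀ i, u i + 2 * δ < v i) (i : Fin n) : u' i ≤ u i + δ ∧ v i ≤ v' i + δ := by
  have nonempty_Ioo (k : Fin n) : u k < v k - 2 * δ := lt_sub_iff_add_lt.2 (h k)
  have mem_Ioo_of_mem {t : ℝ} (ht : t ∈ Set.Ioo (u i) (v i - 2 * δ)) :
      t + δ ∈ Set.Ioo (u' i) (v' i) := by
    choose a ha using fun k => exists_between (nonempty_Ioo k)
    have update_mem (k : Fin n) : Function.update a i t k ∈ Set.Ioo (u k) (v k - 2 * δ) := by
      rcases eq_or_ne k i with rfl | hk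
      · rwa [Function.update_self]
      · rw [Function.update_of_ne hk]
        exact ha k
    obtain ⟨mem, mem_shift⟩ := mem_openBox_and_diagShift_mem update_mem
    have mem_target := F.mem_of_mem mem mem_shift i
    rwa [diagShift, Function.update_self] at mem_target
  constructor
  · exact sub_le_iff_le_add.1 <| (isGLB_Ioo (nonempty_Ioo i)).2 fun t ht =>
      sub_le_iff_le_add.2 (mem_Ioo_of_mem ht).1.le
  · have le_sub : v i - 2 * δ ≤ v' i - δ := (isLUB_Ioo (nonempty_Ioo i)).2 fun t ht =>
      le_sub_iff_add_le.2 (mem_Ioo_of_mem ht).2.le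
    linarith

lemma abs_corner_sub_le (F : DiagInterleaving δ (boxModule 𝕜 u v) (boxModule 𝕜 u' v'))
    (h : ∀ i, u i + 2 * δ < v i) (h' : ∀ i, u' i + 2 * δ < v' i) (i : Fin n) :
    |u' i - u i| ≤ δ ∧ |v' i - v i| ≤ δ := by
  obtain ⟨hu, hv⟩ := corner_le F h i
  obtain ⟨hu', hv'⟩ := corner_le F.symm h' i
  constructor <;> rw [abs_le] <;> constructor <;> linarith

end DiagInterleaving

lemma le_interleavingDist_boxModule_zeroMod (h : ∀ i, u i + 2 * r ≤ v i) :
    r ≤ interleavingDist (boxModule 𝕜 u v) (zeroMod.{0, v, v} (Fin n → ℝ) 𝕜) := by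
  by_contra! hlt
  obtain ⟨δ, hδ, hδr⟩ := ENNReal.lt_iff_exists_nnreal_btwn.1 hlt
  obtain ⟨F⟩ := nonempty_diagInterleaving_of_interleavingDist_lt hδ
  have lt_r : (δ : ℝ) < r := by exact_mod_cast hδr
  exact not_diagInterleaving_boxModule_zeroMod (fun i => by linarith [h i]) F

lemma le_interleavingDist_boxModule (h : ∀ i, u i + 2 * r ≤ v i) (h' : ∀ i, u' i + 2 * r ≤ v' i)
    {i : Fin n} (hi : r ≤ |u' i - u i| ∨ r ≤ |v' i - v i|) :
    r ≤ interleavingDist (boxModule 𝕜 u v) (boxModule 𝕜 u' v') := by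
  by_contra! hlt
  obtain ⟨δ, hδ, hδr⟩ := ENNReal.lt_iff_exists_nnreal_btwn.1 hlt
  obtain ⟨F⟩ := nonempty_diagInterleaving_of_interleavingDist_lt hδ
  have lt_r : (δ : ℝ) < r := by exact_mod_cast hδr
  obtain ⟨hu, hv⟩ := DiagInterleaving.abs_corner_sub_le F
    (fun i => by linarith [h i]) (fun i => by linarith [h' i]) i
  rcases hi with hi | hi <;> linarith

end OpenBox

section Example

/-- Lower corners of the first barcode of the example. -/
def sourceLower : Fin 3 → Fin 2 → ℝ := ![![0, 1], ![0, -1], ![2, 1]]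

/-- Upper corners of the first barcode of the example. -/
def sourceUpper : Fin 3 → Fin 2 → ℝ := ![![10, 11], ![12, 11], ![10, 9]]

/-- Lower corners of the second barcode of the example. -/
def targetLower : Fin 3 → Fin 2 → ℝ := ![![1, 0], ![1, 0], ![-1, 2]]

/-- Upper corners of the second barcode of the example. -/
def targetUpper : Fin 3 → Fin 2 → ℝ := ![![11, 10], ![9, 12], ![11, 10]]

variable (𝕜 : Type v) [Field 𝕜]

/-- The matrix of the morphism of degree `1` from the first to the second module of the example;
its zero entries are the pairs of rectangles with no nonzero such morphism. -/
def sourceToTarget : Matrix (Fin 3) (Fin 3) 𝕜 := !![1, 1, 1; 1, 1, 0; 1, 0, 1]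

/-- The inverse of `sourceToTarget`. -/
def targetToSource : Matrix (Fin 3) (Fin 3) 𝕜 := !![-1, 1, 1; 1, 0, -1; 1, -1, 0]

lemma targetToSource_mul_sourceToTarget : targetToSource 𝕜 * sourceToTarget 𝕜 = 1 := by
  rw [targetToSource, sourceToTarget, Matrix.mul_fin_three, Matrix.one_fin_three]
  norm_num

lemma sourceLower_add_six_le (j : Fin 3) (i : Fin 2) : sourceLower j i + 6 ≤ sourceUpper j i := by
  fin_cases j <;> fin_cases i <;> norm_num [sourceLower, sourceUpper]

lemma targetLower_add_six_le (k : Fin 3) (i : Fin 2) : targetLower k i + 6 ≤ targetUpper k i := by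
  fin_cases k <;> fin_cases i <;> norm_num [targetLower, targetUpper]

variable {𝕜}

lemma target_corner_le_of_sourceToTarget_ne_zero {k j : Fin 3} (h : sourceToTarget 𝕜 k j ≠ 0)
    (i : Fin 2) :
    targetLower k i ≤ sourceLower j i + 1 ∧ targetUpper k i ≤ sourceUpper j i + 1 := by
  fin_cases k <;> fin_cases j <;> first
    | exact absurd rfl h
    | fin_cases i <;> norm_num [sourceLower, sourceUpper, targetLower, targetUpper]

lemma source_corner_le_of_targetToSource_ne_zero {j k : Fin 3} (h : targetToSource 𝕜 j k ≠ 0)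
    (i : Fin 2) :
    sourceLower j i ≤ targetLower k i + 1 ∧ sourceUpper j i ≤ targetUpper k i + 1 := by
  fin_cases j <;> fin_cases k <;> first
    | exact absurd rfl h
    | fin_cases i <;> norm_num [sourceLower, sourceUpper, targetLower, targetUpper]

lemma exists_three_le_abs_corner_sub {j k : Fin 3} (hj : j ≠ 0) (hk : k ≠ 0) :
    ∃ i, 3 ≤ |targetLower k i - sourceLower j i| ∨ 3 ≤ |targetUpper k i - sourceUpper j i| := by
  rw [Fin.exists_fin_two]
  fin_cases j <;> fin_cases k <;> first
    | contradiction
    | norm_num [sourceLower, sourceUpper, targetLower, targetUpper, abs_le]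

variable (𝕜)

lemma interleavingDist_source_target_le_one :
    interleavingDist (dirSum fun j => boxModule 𝕜 (sourceLower j) (sourceUpper j))
      (dirSum fun k => boxModule 𝕜 (targetLower k) (targetUpper k)) ≤ 1 := by
  have source_lt (j : Fin 3) (i : Fin 2) : sourceLower j i < sourceUpper j i := by
    linarith [sourceLower_add_six_le j i]
  have target_lt (k : Fin 3) (i : Fin 2) : targetLower k i < targetUpper k i := by
    linarith [targetLower_add_six_le k i]
  refine DiagInterleaving.interleavingDist_le (δ := 1) (Interleaving.ofMatrices
    (C := sourceToTarget 𝕜) (D := targetToSource 𝕜) (fun k j h => ?_) (fun j k h => ?_)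
    (targetToSource_mul_sourceToTarget 𝕜) (mul_eq_one_comm.1 (targetToSource_mul_sourceToTarget 𝕜)))
  · exact shiftPrecedes_openBox (source_lt j) (target_lt k)
      (fun i => (target_corner_le_of_sourceToTarget_ne_zero h i).1)
      (fun i => (target_corner_le_of_sourceToTarget_ne_zero h i).2)
  · exact shiftPrecedes_openBox (target_lt k) (source_lt j)
      (fun i => (source_corner_le_of_targetToSource_ne_zero h i).1)
      (fun i => (source_corner_le_of_targetToSource_ne_zero h i).2)

lemma three_le_interleavingDist_source_zeroMod (j : Fin 3) :
    3 ≤ interleavingDist (boxModule 𝕜 (sourceLower j) (sourceUpper j))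
      (zeroMod.{0, v, v} (Fin 2 → ℝ) 𝕜) :=
  le_interleavingDist_boxModule_zeroMod (r := 3) fun i =>
    (by norm_num : sourceLower j i + 2 * (3 : ℝ≥0) = sourceLower j i + 6).trans_le
      (sourceLower_add_six_le j i)

lemma three_le_interleavingDist_source_target {j k : Fin 3} (hj : j ≠ 0) (hk : k ≠ 0) :
    3 ≤ interleavingDist (boxModule 𝕜 (sourceLower j) (sourceUpper j))
      (boxModule 𝕜 (targetLower k) (targetUpper k)) := by
  obtain ⟨i, hi⟩ := exists_three_le_abs_corner_sub hj hk
  refine le_interleavingDist_boxModule (r := 3) (fun i => ?_) (fun i => ?_) (i := i) hi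
  · exact (by norm_num : sourceLower j i + 2 * (3 : ℝ≥0) = sourceLower j i + 6).trans_le
      (sourceLower_add_six_le j i)
  · exact (by norm_num : targetLower k i + 2 * (3 : ℝ≥0) = targetLower k i + 6).trans_le
      (targetLower_add_six_le k i)

lemma not_isEpsMatching_source_target {ε : ℝ≥0∞} (hε : ε < 3) :
    ¬ IsEpsMatching 𝕜 (fun j => openBox (sourceLower j) (sourceUpper j))
      (fun k => openBox (targetLower k) (targetUpper k))
      (fun _ => (isInterval_openBox _ _).1) (fun _ => (isInterval_openBox _ _).1) ε := by
  rintro ⟨S, T, e, matched, unmatched, -⟩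
  have mem (j : Fin 3) : j ∈ S := by
    by_contra hj
    exact ((three_le_interleavingDist_source_zeroMod 𝕜 j).trans (unmatched j hj)).not_gt hε
  have matched_zero {j : Fin 3} (hj : j ≠ 0) : (e ⟨j, mem j⟩ : Fin 3) = 0 := by
    by_contra hk
    exact ((three_le_interleavingDist_source_target 𝕜 hj hk).trans (matched ⟨j, mem j⟩)).not_gt hε
  have one_eq_two : (⟨1, mem 1⟩ : S) = ⟨2, mem 2⟩ :=
    e.injective (Subtype.ext ((matched_zero (by decide)).trans (matched_zero (by decide)).symm))
  exact absurd (Subtype.mk.inj one_eq_two) (by decide)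

end Example

theorem interleaving_le_bottleneck_general (𝕜 : Type v) [Field 𝕜] :
    (∀ {J K : Type} (I : J → Set (Fin n → ℝ)) (I' : K → Set (Fin n → ℝ))
      (hI : ∀ j, IntervalConvex (I j)) (hI' : ∀ κ, IntervalConvex (I' κ))
      (M N : PersistenceModule (Fin n → ℝ) 𝕜)
      (_ : Nonempty (PersIso M (dirSum fun j => intervalModule 𝕜 (I j) (hI j))))
      (_ : Nonempty (PersIso N (dirSum fun κ => intervalModule 𝕜 (I' κ) (hI' κ)))),
      interleavingDist M N
        ≤ bottleneckDist 𝕜 I I' hI hI') ∧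
    (∃ (J K : Type) (_ : Fintype J) (_ : Fintype K)
      (I : J → Set (Fin 2 → ℝ)) (I' : K → Set (Fin 2 → ℝ))
      (hI : ∀ j, IsInterval (I j)) (hI' : ∀ κ, IsInterval (I' κ)),
      (∀ j, ∃ u v : Fin 2 → ℝ, I j = {x | ∀ i, x i ∈ Set.Ioo (u i) (v i)}) ∧
      (∀ κ, ∃ u v : Fin 2 → ℝ, I' κ = {x | ∀ i, x i ∈ Set.Ioo (u i) (v i)}) ∧
      interleavingDist (dirSum fun j => intervalModule 𝕜 (I j) (hI j).1)
          (dirSum fun κ => intervalModule 𝕜 (I' κ) (hI' κ).1) ≤ 1 ∧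
      ∀ ε : ℝ≥0∞, ε < 3 →
        ¬ IsEpsMatching 𝕜 I I' (fun j => (hI j).1) (fun κ => (hI' κ).1) ε) := by
  refine ⟨fun _ _ _ _ _ _ ⟨eM⟩ ⟨eN⟩ => interleavingDist_le_bottleneckDist eM eN, ?_⟩
  exact ⟨Fin 3, Fin 3, inferInstance, inferInstance,
    fun j => openBox (sourceLower j) (sourceUpper j),
    fun k => openBox (targetLower k) (targetUpper k),
    fun _ => isInterval_openBox _ _, fun _ => isInterval_openBox _ _,
    fun _ => ⟨_, _, rfl⟩, fun _ => ⟨_, _, rfl⟩,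
    interleavingDist_source_target_le_one 𝕜, fun _ => not_isEpsMatching_source_target 𝕜⟩

/-- The bottleneck distance bounds the interleaving distance: for
interval decomposable `n`-parameter persistence modules `M ≅ ⨁_j 𝟙^{I_j}` and
`N ≅ ⨁_κ 𝟙^{I'_κ}` one has `d^ω(M,N) ≤ d_B(M,N)`; moreover the inequality can be
strict: there exist rectangle decomposable 2-parameter modules that are 1-interleaved
but admit no `ε`-matching for any `ε < 3`. -/
theorem interleaving_le_bottleneck (𝕜 : Type v) [Field 𝕜] :
    (∀ {J K : Type} (I : J → Set (Fin n → ℝ)) (I' : K → Set (Fin n → ℝ))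
      (hI : ∀ j, IsInterval (I j)) (hI' : ∀ κ, IsInterval (I' κ))
      (M N : PersistenceModule (Fin n → ℝ) 𝕜)
      (_ : Nonempty (PersIso M (dirSum fun j => intervalModule 𝕜 (I j) (hI j).1)))
      (_ : Nonempty (PersIso N (dirSum fun κ => intervalModule 𝕜 (I' κ) (hI' κ).1))),
      interleavingDist M N
        ≤ bottleneckDist 𝕜 I I' (fun j => (hI j).1) (fun κ => (hI' κ).1)) ∧
    (∃ (J K : Type) (_ : Fintype J) (_ : Fintype K)
      (I : J → Set (Fin 2 → ℝ)) (I' : K → Set (Fin 2 → ℝ))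
      (hI : ∀ j, IsInterval (I j)) (hI' : ∀ κ, IsInterval (I' κ)),
      (∀ j, ∃ u v : Fin 2 → ℝ, I j = {x | ∀ i, x i ∈ Set.Ioo (u i) (v i)}) ∧
      (∀ κ, ∃ u v : Fin 2 → ℝ, I' κ = {x | ∀ i, x i ∈ Set.Ioo (u i) (v i)}) ∧
      interleavingDist (dirSum fun j => intervalModule 𝕜 (I j) (hI j).1)
          (dirSum fun κ => intervalModule 𝕜 (I' κ) (hI' κ).1) ≤ 1 ∧
      ∀ ε : ℝ≥0∞, ε < 3 →
        ¬ IsEpsMatching 𝕜 I I' (fun j => (hI j).1) (fun κ => (hI' κ).1) ε) :=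
  (interleaving_le_bottleneck_general 𝕜).imp_left fun le _ _ I I' hI hI' =>
    le I I' (fun j => (hI j).1) fun κ => (hI' κ).1

end PersistenceModule
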